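/- Let T be a finite tree with at least three vertices. Then the domination subdivision number of T equals 3 (i.e., sd(T) = 3) if and only if T has a unique dominating 2-packing containing all leaves of T. -/

import Mathlib

open SimpleGraph

namespace GenCorona

universe u

/-- A vertex neighborhood partition of a graph `G`: for every vertex `v`, a partition
of the open neighborhood `N_G(v)` into nonempty sets. -/
structure NbhdPartition {V : Type u} (G : SimpleGraph V) where
  part : V → Set (Set V)
  nonempty : ∀ v : V, ∀ A ∈ part v, A.Nonempty
  subset_nbhd : ∀ v : V, ∀ A ∈ part v, A ⊆ G.neighborSet v
  covers : ∀ v : V, ∀ u ∈ G.neighborSet v, ∃ A ∈ part v, u ∈ A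
  eq_of_inter : ∀ v : V, ∀ A ∈ part v, ∀ B ∈ part v, (A ∩ B).Nonempty → A = B

variable {V : Type u}

/-- The vertex type of the general corona `G ∘ 𝒫`: external vertices `(v,1)` are encoded
as `Sum.inl v`, internal vertices `(v,A)` (with `A ∈ 𝒫(v)`) as `Sum.inr ⟨(v,A), _⟩`. -/
abbrev CoronaVert (G : SimpleGraph V) (P : NbhdPartition G) : Type u :=
  V ⊕ {p : V × Set V // p.2 ∈ P.part p.1}

/-- The general corona `G ∘ 𝒫`. -/
def corona (G : SimpleGraph V) (P : NbhdPartition G) : SimpleGraph (CoronaVert G P) :=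
  SimpleGraph.fromRel fun x y =>
    match x, y with
    | Sum.inl v, Sum.inr p => v = p.val.1
    | Sum.inr p, Sum.inr q =>
        G.Adj p.val.1 q.val.1 ∧ q.val.1 ∈ p.val.2 ∧ p.val.1 ∈ q.val.2
    | _, _ => False

/-- The set of external vertices of the general corona. -/
def Ext (G : SimpleGraph V) (P : NbhdPartition G) : Set (CoronaVert G P) :=
  Set.range Sum.inl

/-- A graph is a general corona of a tree if it is isomorphic to `T ∘ 𝒫` for some finite
tree `T` and some vertex neighborhood partition `𝒫` of `T`. -/
def IsGeneralCoronaOfTree {W : Type*} (H : SimpleGraph W) : Prop :=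
  ∃ (n : ℕ) (T : SimpleGraph (Fin n)) (P : NbhdPartition T),
    T.IsTree ∧ Nonempty (H ≃g corona T P)

/-- A graph `H` is a general corona of a tree with external vertex set `E`. -/
def IsGenCoronaWithExt {W : Type*} (H : SimpleGraph W) (E : Set W) : Prop :=
  ∃ (n : ℕ) (T : SimpleGraph (Fin n)) (P : NbhdPartition T),
    T.IsTree ∧ ∃ f : H ≃g corona T P, E = ⇑f ⁻¹' Ext T P

/-- `D` is a dominating set of `G`. -/
def IsDominating (G : SimpleGraph V) (D : Set V) : Prop :=
  ∀ v ∉ D, ∃ u ∈ D, G.Adj v u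

/-- `S` is a 2-packing of `G`: any two distinct vertices of `S` are at distance
greater than 2 (where the extended distance of unreachable vertices is `⊤`). -/
def Is2Packing (G : SimpleGraph V) (S : Set V) : Prop :=
  ∀ u ∈ S, ∀ v ∈ S, u ≠ v → 2 < G.edist u v

/-- A leaf is a vertex of degree 1, i.e. with exactly one neighbor. -/
def IsLeaf (G : SimpleGraph V) (v : V) : Prop :=
  (G.neighborSet v).ncard = 1

/-- The domination number: the minimum size of a dominating set. -/
noncomputable def dominationNumber (G : SimpleGraph V) : ℕ :=
  sInf {n : ℕ | ∃ D : Set V, IsDominating G D ∧ D.ncard = n}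

/-- The graph obtained from `G` by subdividing every edge in `F` (each once):
for each `e ∈ F` a new vertex `Sum.inr e` replaces the edge `e` by a path of length two. -/
def subdivide (G : SimpleGraph V) (F : Set (Sym2 V)) : SimpleGraph (V ⊕ F) :=
  SimpleGraph.fromRel fun x y =>
    match x, y with
    | Sum.inl u, Sum.inl v => G.Adj u v ∧ s(u, v) ∉ F
    | Sum.inl u, Sum.inr e => u ∈ e.val
    | _, _ => False

/-- The domination subdivision number `sd(G)`: the minimum number of edges which must be
subdivided (each edge at most once) in order to increase the domination number. -/
noncomputable def sd (G : SimpleGraph V) : ℕ :=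
  sInf {k : ℕ | ∃ F : Set (Sym2 V), F ⊆ G.edgeSet ∧ F.ncard = k ∧
    dominationNumber G < dominationNumber (subdivide G F)}

/-- The corona `G ∘ K₁`: attach one new pendant vertex `Sum.inr v` to each vertex
`Sum.inl v` of `G`. -/
def coronaK1 (G : SimpleGraph V) : SimpleGraph (V ⊕ V) :=
  SimpleGraph.fromRel fun x y =>
    match x, y with
    | Sum.inl u, Sum.inl w => G.Adj u w
    | Sum.inl u, Sum.inr w => u = w
    | _, _ => False

/-- The 2-subdivision `S₂(G)`: every edge `uv` is replaced by a path `(u, x₁, x₂, v)`;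
the new vertex `Sum.inr ⟨(u,v), _⟩` is the subdivision vertex adjacent to `u`. -/
def twoSubdivision (G : SimpleGraph V) : SimpleGraph (V ⊕ {p : V × V // G.Adj p.1 p.2}) :=
  SimpleGraph.fromRel fun x y =>
    match x, y with
    | Sum.inl u, Sum.inr p => u = p.val.1
    | Sum.inr p, Sum.inr q => p.val.1 = q.val.2 ∧ p.val.2 = q.val.1
    | _, _ => False

/-- `𝒫'` is a refinement of `𝒫`. -/
def Refines {G : SimpleGraph V} (P' P : NbhdPartition G) : Prop :=
  ∀ v : V, ∀ A ∈ P'.part v, ∃ B ∈ P.part v, A ⊆ B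

/-- The graph obtained by contracting the two vertices `x` and `y` of `G` to the single
vertex `x` (the vertex `y` is removed, and `x` becomes adjacent to all former
neighbors of `y`). -/
def contractPair {W : Type*} (G : SimpleGraph W) (x y : W) :
    SimpleGraph {w : W // w ≠ y} :=
  SimpleGraph.fromRel fun a b =>
    G.Adj a.val b.val ∨ (a.val = x ∧ G.Adj y b.val) ∨ (b.val = x ∧ G.Adj a.val y)

/-- The graph obtained from `G` by attaching a path `(x, y, z)` (encoded as
`Sum.inr 0, Sum.inr 1, Sum.inr 2`) to the vertex `v` via the edge `v x`. -/
def attachPath3 {W : Type*} (G : SimpleGraph W) (v : W) : SimpleGraph (W ⊕ Fin 3) :=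
  SimpleGraph.fromRel fun a b =>
    match a, b with
    | Sum.inl u, Sum.inl w => G.Adj u w
    | Sum.inl u, Sum.inr i => u = v ∧ i = 0
    | Sum.inr i, Sum.inr j => (i = 0 ∧ j = 1) ∨ (i = 1 ∧ j = 2)
    | _, _ => False

/-- The graph obtained from `G` by attaching a path `(x, y)` (encoded as
`Sum.inr 0, Sum.inr 1`) to the vertex `v` via the edge `v x`. -/
def attachPath2 {W : Type*} (G : SimpleGraph W) (v : W) : SimpleGraph (W ⊕ Fin 2) :=
  SimpleGraph.fromRel fun a b =>
    match a, b with
    | Sum.inl u, Sum.inl w => G.Adj u w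
    | Sum.inl u, Sum.inr i => u = v ∧ i = 0
    | Sum.inr i, Sum.inr j => i = 0 ∧ j = 1
    | _, _ => False

/-- The family `𝓕` of labeled trees; the label of a vertex is `A` when it belongs to the
distinguished set `L`, and `B` otherwise.  The family contains the labeled path `P₄`
(leaves labeled `A`, support vertices labeled `B`) and is closed under the two
attachment operations. -/
inductive LabF : ∀ {W : Type}, SimpleGraph W → Set W → Prop where
  | base : LabF (SimpleGraph.pathGraph 4) ({0, 3} : Set (Fin 4))
  | opA {W : Type} {G : SimpleGraph W} {L : Set W} (v : W) :
      LabF G L → v ∈ L →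
        LabF (attachPath3 G v) (Sum.inl '' L ∪ {Sum.inr (2 : Fin 3)})
  | opB {W : Type} {G : SimpleGraph W} {L : Set W} (v : W) :
      LabF G L → v ∉ L →
        LabF (attachPath2 G v) (Sum.inl '' L ∪ {Sum.inr (1 : Fin 2)})

/-- A tree `T` belongs to the family `𝓕` if it admits a labeling constructed by the
above rules, i.e. it is isomorphic to a member of the inductively generated family. -/
def MemF {W : Type*} (T : SimpleGraph W) : Prop :=
  ∃ (W' : Type) (G : SimpleGraph W') (L : Set W'), LabF G L ∧ Nonempty (T ≃g G)

/-!
A dominating 2-packing `S` of `T` witnesses that the domination number `γ` is both the minimum size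
of a dominating set and the maximum size of a 2-packing. In a tree these two numbers always agree
(Meir–Moon), so a maximum 2-packing `P` has `γ` elements. If some vertex `v` with a neighbor `u` is
not dominated by `P`, subdivide `uv` and the edge from `u` to `P`, if there is one: the new vertex
of `uv` then enlarges `P`, and `sd T ≤ 2`. Hence `P` is dominating when `sd T = 3`. Two distinct
dominating 2-packings containing all leaves cannot exist: once the tree is rooted, every vertex of
one that is missing from the other forces a deeper vertex of the other that is missing from the one,
so their difference has no deepest element.

Conversely, let `S` be a dominating 2-packing containing all leaves. Subdividing an edge `bc` with
ends outside `S` together with the edges from `b` and `c` to `S` makes room for one more vertex in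
the packing `S`. If at most two edges are subdivided, they leave a common subtree `C`, and moving
every element of `S` outside `C` one step towards `C` gives a dominating set of the subdivided tree.
-/

lemma isDominating_iff {G : SimpleGraph V} {D : Set V} :
    IsDominating G D ↔ ∀ v, ∃ u ∈ D, u = v ∨ G.Adj v u := by
  refine ⟨fun h v => ?_, fun h v hv => ?_⟩
  · by_cases hv : v ∈ D
    · exact ⟨v, hv, Or.inl rfl⟩
    · obtain ⟨u, hu, hvu⟩ := h v hv
      exact ⟨u, hu, Or.inr hvu⟩
  · obtain ⟨u, hu, rfl | hvu⟩ := h v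
    · exact absurd hu hv
    · exact ⟨u, hu, hvu⟩

lemma is2Packing_iff {G : SimpleGraph V} {P : Set V} :
    Is2Packing G P ↔ (∀ p ∈ P, ∀ q ∈ P, ¬ G.Adj p q) ∧
      ∀ p ∈ P, ∀ q ∈ P, ∀ w, G.Adj w p → G.Adj w q → p = q := by
  simp only [Is2Packing, two_lt_edist_iff, Set.eq_empty_iff_forall_notMem, mem_commonNeighbors]
  refine ⟨fun h => ⟨fun p hp q hq hpq => (h p hp q hq hpq.ne).2.1 hpq, ?_⟩, ?_⟩
  · intro p hp q hq w hwp hwq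
    by_contra hpq
    exact (h p hp q hq hpq).2.2 w ⟨hwp.symm, hwq.symm⟩
  · rintro ⟨hadj, heq⟩ p hp q hq hpq
    exact ⟨hpq, hadj p hp q hq, fun w hw => hpq (heq p hp q hq w hw.1.symm hw.2.symm)⟩

lemma Is2Packing.not_adj {G : SimpleGraph V} {P : Set V} (hP : Is2Packing G P) {p q : V}
    (hp : p ∈ P) (hq : q ∈ P) : ¬ G.Adj p q :=
  (is2Packing_iff.1 hP).1 p hp q hq

lemma Is2Packing.eq_of_adj {G : SimpleGraph V} {P : Set V} (hP : Is2Packing G P) {p q w : V}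
    (hp : p ∈ P) (hq : q ∈ P) (hwp : G.Adj w p) (hwq : G.Adj w q) : p = q :=
  (is2Packing_iff.1 hP).2 p hp q hq w hwp hwq

lemma Is2Packing.mono {G : SimpleGraph V} {P Q : Set V} (hP : Is2Packing G P) (hQP : Q ⊆ P) :
    Is2Packing G Q :=
  fun p hp q hq => hP p (hQP hp) q (hQP hq)

lemma Is2Packing.insert_of_forall {G : SimpleGraph V} {P : Set V}
    (hP : Is2Packing G P) {x : V} (hadj : ∀ p ∈ P, ¬ G.Adj x p)
    (heq : ∀ p ∈ P, ∀ w, G.Adj w x → G.Adj w p → x = p) :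
    Is2Packing G (insert x P) := by
  refine is2Packing_iff.2 ⟨?_, ?_⟩
  · rintro _ (rfl | hp) _ (rfl | hq) hpq
    · exact hpq.ne rfl
    · exact hadj _ hq hpq
    · exact hadj _ hp hpq.symm
    · exact hP.not_adj hp hq hpq
  · rintro _ (rfl | hp) _ (rfl | hq) w hwp hwq
    · rfl
    · exact heq _ hq w hwp hwq
    · exact (heq _ hp w hwq hwp).symm
    · exact hP.eq_of_adj hp hq hwp hwq

lemma exists_adj_ne_of_not_isLeaf {G : SimpleGraph V} {a b : V} (ha : ¬ IsLeaf G a)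
    (hab : G.Adj a b) : ∃ c, c ≠ b ∧ G.Adj a c := by
  by_contra! h
  refine ha (Set.ncard_eq_one.2 ⟨b, Set.eq_singleton_iff_unique_mem.2 ⟨hab, fun c hac => ?_⟩⟩)
  by_contra hcb
  exact h c hcb hac

lemma IsLeaf.exists_adj {G : SimpleGraph V} {v : V} (hv : IsLeaf G v) :
    ∃ w, G.Adj v w ∧ ∀ a, G.Adj v a → a = w := by
  obtain ⟨w, hw⟩ := Set.ncard_eq_one.1 hv
  exact ⟨w, Set.eq_singleton_iff_unique_mem.1 hw⟩

lemma IsLeaf.exists_ne_adj_of_adj {G : SimpleGraph V} (hG : G.Connected) (hV : 2 < Nat.card V)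
    {v w : V} (hv : IsLeaf G v) (hvw : G.Adj v w) : ∃ c, c ≠ v ∧ G.Adj w c := by
  obtain ⟨w', -, huniq⟩ := hv.exists_adj
  obtain ⟨z, hz⟩ : ∃ z, z ∉ ({v, w} : Set V) := by
    by_contra! h
    rw [← Set.ncard_univ, ← Set.eq_univ_of_forall h, Set.ncard_pair hvw.ne] at hV
    exact hV.false
  obtain ⟨p⟩ := hG.preconnected v z
  obtain ⟨⟨⟨a, c⟩, hac⟩, -, ha, hc⟩ := p.exists_boundary_dart {v, w} (Or.inl rfl) hz
  rw [Set.mem_insert_iff, Set.mem_singleton_iff, not_or] at hc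
  rcases ha with rfl | rfl
  · exact absurd ((huniq c hac).trans (huniq w hvw).symm) hc.2
  · exact ⟨c, hc.1, hac⟩

section DominationNumber

variable {G : SimpleGraph V}

lemma dominationNumber_le {D : Set V} (hD : IsDominating G D) : dominationNumber G ≤ D.ncard :=
  Nat.sInf_le ⟨D, hD, rfl⟩

lemma exists_isDominating_ncard_eq (G : SimpleGraph V) :
    ∃ D, IsDominating G D ∧ D.ncard = dominationNumber G :=
  Nat.sInf_mem (s := {n : ℕ | ∃ D : Set V, IsDominating G D ∧ D.ncard = n})
    ⟨_, Set.univ, fun v hv => absurd (Set.mem_univ v) hv, rfl⟩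

lemma Is2Packing.ncard_le_dominationNumber [Finite V] {P : Set V} (hP : Is2Packing G P) :
    P.ncard ≤ dominationNumber G := by
  obtain ⟨D, hD, hcard⟩ := exists_isDominating_ncard_eq G
  rw [← hcard]
  choose f hfD hf using isDominating_iff.1 hD
  refine Set.ncard_le_ncard_of_injOn f (fun p _ => hfD p) fun p hp q hq hpq => ?_
  have hfp := hf p
  rw [hpq] at hfp
  rcases hfp with rfl | hp' <;> rcases hf q with hq' | hq'
  · exact hq'
  · exact absurd hq'.symm (hP.not_adj hp hq)
  · exact absurd (hq' ▸ hp') (hP.not_adj hp hq)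
  · exact hP.eq_of_adj hp hq hp'.symm hq'.symm

lemma Is2Packing.ncard_eq_dominationNumber [Finite V] {P : Set V} (hP : Is2Packing G P)
    (hD : IsDominating G P) : P.ncard = dominationNumber G :=
  hP.ncard_le_dominationNumber.antisymm (dominationNumber_le hD)

lemma sd_le_ncard {F : Set (Sym2 V)} (hF : F ⊆ G.edgeSet)
    (hlt : dominationNumber G < dominationNumber (subdivide G F)) : sd G ≤ F.ncard :=
  Nat.sInf_le ⟨F, hF, rfl, hlt⟩

lemma sd_eq_add_one {k : ℕ}
    (hex : ∃ F ⊆ G.edgeSet, F.ncard ≤ k + 1 ∧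
      dominationNumber G < dominationNumber (subdivide G F))
    (hle : ∀ F ⊆ G.edgeSet, F.ncard ≤ k →
      dominationNumber (subdivide G F) ≤ dominationNumber G) :
    sd G = k + 1 := by
  obtain ⟨F, hF, hcard, hlt⟩ := hex
  refine ((sd_le_ncard hF hlt).trans hcard).antisymm (le_csInf ⟨_, F, hF, rfl, hlt⟩ ?_)
  rintro _ ⟨F', hF', rfl, hlt'⟩
  by_contra! hcard'
  exact (hle F' hF' (Nat.lt_succ_iff.1 hcard')).not_gt hlt'

end DominationNumber

section Subdivide

variable {G : SimpleGraph V} {F : Set (Sym2 V)}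

@[simp] lemma subdivide_adj_inl_inl {a b : V} :
    (subdivide G F).Adj (Sum.inl a) (Sum.inl b) ↔ G.Adj a b ∧ s(a, b) ∉ F := by
  simp only [subdivide, fromRel_adj, ne_eq, Sum.inl.injEq, G.adj_comm b a, Sym2.eq_swap (a := b),
    or_self]
  exact ⟨fun h => h.2, fun h => ⟨h.1.ne, h⟩⟩

@[simp] lemma subdivide_adj_inl_inr {a : V} {e : F} :
    (subdivide G F).Adj (Sum.inl a) (Sum.inr e) ↔ a ∈ e.val := by
  simp [subdivide]

@[simp] lemma subdivide_adj_inr_inl {a : V} {e : F} :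
    (subdivide G F).Adj (Sum.inr e) (Sum.inl a) ↔ a ∈ e.val := by
  simp [subdivide]

@[simp] lemma not_subdivide_adj_inr_inr {e f : F} :
    ¬ (subdivide G F).Adj (Sum.inr e) (Sum.inr f) := by
  simp [subdivide]

lemma Is2Packing.image_inl {P : Set V} (hP : Is2Packing G P) (hF : F ⊆ G.edgeSet) :
    Is2Packing (subdivide G F) (Sum.inl '' P) := by
  refine is2Packing_iff.2 ⟨?_, ?_⟩
  · rintro _ ⟨p, hp, rfl⟩ _ ⟨q, hq, rfl⟩ hpq
    exact hP.not_adj hp hq (subdivide_adj_inl_inl.1 hpq).1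
  · rintro _ ⟨p, hp, rfl⟩ _ ⟨q, hq, rfl⟩ (w | g) hwp hwq
    · rw [hP.eq_of_adj hp hq (subdivide_adj_inl_inl.1 hwp).1 (subdivide_adj_inl_inl.1 hwq).1]
    · rw [subdivide_adj_inr_inl] at hwp hwq
      by_contra hpq
      have hg : g.val = s(p, q) := (Sym2.mem_and_mem_iff (by simpa using hpq)).1 ⟨hwp, hwq⟩
      exact hP.not_adj hp hq (hF (hg ▸ g.2))

lemma Is2Packing.insert_inr_image_inl {P : Set V} (hP : Is2Packing G P) (hF : F ⊆ G.edgeSet)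
    (e : F) (he : ∀ a ∈ e.val, a ∉ P)
    (hcut : ∀ a ∈ e.val, ∀ p ∈ P, G.Adj a p → s(a, p) ∈ F) :
    Is2Packing (subdivide G F) (insert (Sum.inr e) (Sum.inl '' P)) := by
  refine (hP.image_inl hF).insert_of_forall ?_ ?_
  · rintro _ ⟨p, hp, rfl⟩ hep
    exact he p (subdivide_adj_inr_inl.1 hep) hp
  · rintro _ ⟨p, hp, rfl⟩ (w | g) hwe hwp
    · rw [subdivide_adj_inl_inr] at hwe
      rw [subdivide_adj_inl_inl] at hwp
      exact absurd (hcut w hwe p hp hwp.1) hwp.2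
    · exact absurd hwe not_subdivide_adj_inr_inr

lemma Is2Packing.lt_dominationNumber_subdivide [Finite V] {P : Set V} (hP : Is2Packing G P)
    (hF : F ⊆ G.edgeSet) {u v : V} (huv : s(u, v) ∈ F) (hu : u ∉ P) (hv : v ∉ P)
    (hcut_u : ∀ p ∈ P, G.Adj u p → s(u, p) ∈ F) (hcut_v : ∀ p ∈ P, G.Adj v p → s(v, p) ∈ F) :
    P.ncard < dominationNumber (subdivide G F) := by
  have hQ := hP.insert_inr_image_inl hF ⟨s(u, v), huv⟩
    (by rintro a ha; rcases Sym2.mem_iff.1 ha with rfl | rfl <;> assumption)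
    (by rintro a ha; rcases Sym2.mem_iff.1 ha with rfl | rfl <;> assumption)
  have hcard := hQ.ncard_le_dominationNumber
  rwa [Set.ncard_insert_of_notMem (by simp), Set.ncard_image_of_injective _ Sum.inl_injective]
    at hcard

lemma Is2Packing.sd_le_two [Finite V] {P : Set V} (hP : Is2Packing G P)
    (hcard : P.ncard = dominationNumber G) {u v : V} (huv : G.Adj u v) (hv : v ∉ P)
    (hvP : ∀ p ∈ P, ¬ G.Adj v p) : sd G ≤ 2 := by
  set E : Set (Sym2 V) := {e | ∃ p ∈ P, G.Adj u p ∧ e = s(u, p)}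
  have hE : E.ncard ≤ 1 := by
    refine Set.ncard_le_one_iff_subsingleton.2 ?_
    rintro _ ⟨p, hp, hup, rfl⟩ _ ⟨q, hq, huq, rfl⟩
    rw [hP.eq_of_adj hp hq hup huq]
  have hF : insert s(u, v) E ⊆ G.edgeSet := by
    rintro _ (rfl | ⟨p, -, hup, rfl⟩)
    · exact huv
    · exact hup
  have hlt := hP.lt_dominationNumber_subdivide hF (Set.mem_insert _ _)
    (fun hu => hvP u hu huv.symm) hv (fun p hp hup => Or.inr ⟨p, hp, hup, rfl⟩)
    fun p hp hvp => absurd hvp (hvP p hp)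
  exact (sd_le_ncard hF (hcard ▸ hlt)).trans
    ((Set.ncard_insert_le _ _).trans (Nat.succ_le_succ hE))

lemma Is2Packing.isDominating_of_two_lt_sd [Finite V] (hG : ∀ v, ∃ w, G.Adj v w) {P : Set V}
    (hP : Is2Packing G P) (hcard : P.ncard = dominationNumber G) (hsd : 2 < sd G) :
    IsDominating G P := by
  intro v hv
  by_contra! hvP
  obtain ⟨u, hvu⟩ := hG v
  exact (hP.sd_le_two hcard hvu.symm hv hvP).not_gt hsd

/-- Otherwise `v` could replace its neighbor `w` in `P`, leaving the other neighbors of `w`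
undominated. -/
lemma Is2Packing.isLeaf_mem_of_two_lt_sd [Finite V] (hG : G.Connected) (hV : 2 < Nat.card V)
    {P : Set V} (hP : Is2Packing G P) (hD : IsDominating G P) (hsd : 2 < sd G) {v : V}
    (hv : IsLeaf G v) : v ∈ P := by
  by_contra hvP
  obtain ⟨w, hw, hvw⟩ := hD v hvP
  have huniq : ∀ a, G.Adj v a → a = w := by
    obtain ⟨w', -, h⟩ := hv.exists_adj
    exact fun a ha => (h a ha).trans (h w hvw).symm
  obtain ⟨c, hcv, hwc⟩ := hv.exists_ne_adj_of_adj hG hV hvw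
  have hcP : c ∉ P := fun hc => hP.not_adj hw hc hwc
  have hQ : Is2Packing G (insert v (P \ {w})) :=
    (hP.mono Set.sdiff_subset).insert_of_forall (fun p hp hvp => hp.2 (huniq p hvp))
      fun p hp x hxv hxp => absurd (huniq x hxv.symm ▸ hxp) (hP.not_adj hw hp.1)
  have hcard : (insert v (P \ {w})).ncard = dominationNumber G :=
    (Set.ncard_exchange hvP hw).trans (hP.ncard_eq_dominationNumber hD)
  refine (hQ.sd_le_two hcard hwc ?_ ?_).not_gt hsd
  · rintro (rfl | ⟨hc, -⟩)
    · exact hcv rfl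
    · exact hcP hc
  · rintro p (rfl | ⟨hp, hpw⟩) hcp
    · exact hcP (huniq c hcp.symm ▸ hw)
    · exact hpw (hP.eq_of_adj hp hw hcp hwc.symm)

lemma Is2Packing.exists_lt_dominationNumber_subdivide [Finite V] (hG : G ≠ ⊥) {S : Set V}
    (hS : Is2Packing G S) (hD : IsDominating G S) (hleaf : ∀ v, IsLeaf G v → v ∈ S) :
    ∃ F ⊆ G.edgeSet, F.ncard ≤ 3 ∧ dominationNumber G < dominationNumber (subdivide G F) := by
  obtain ⟨s, b, hs, hbs⟩ : ∃ s b, s ∈ S ∧ G.Adj b s := by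
    obtain ⟨a, b, hab⟩ := ne_bot_iff_exists_adj.1 hG
    by_cases ha : a ∈ S
    · exact ⟨a, b, ha, hab.symm⟩
    · obtain ⟨s, hs, has⟩ := hD a ha
      exact ⟨s, a, hs, has⟩
  have hb : b ∉ S := fun hb => hS.not_adj hb hs hbs
  obtain ⟨c, hcs, hbc⟩ := exists_adj_ne_of_not_isLeaf (fun h => hb (hleaf b h)) hbs
  have hc : c ∉ S := fun hc => hcs (hS.eq_of_adj hc hs hbc hbs)
  obtain ⟨s', hs', hcs'⟩ := hD c hc
  have hF : {s(b, c), s(b, s), s(c, s')} ⊆ G.edgeSet := by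
    rintro _ (rfl | rfl | rfl) <;> assumption
  refine ⟨_, hF, ?_, ?_⟩
  · exact (Set.ncard_insert_le _ _).trans
      (Nat.succ_le_succ ((Set.ncard_insert_le _ _).trans (by simp)))
  · rw [← hS.ncard_eq_dominationNumber hD]
    refine hS.lt_dominationNumber_subdivide hF (Or.inl rfl) hb hc (fun p hp hbp => ?_)
      fun p hp hcp => ?_
    · exact Or.inr (Or.inl (by rw [hS.eq_of_adj hp hs hbp hbs]))
    · exact Or.inr (Or.inr (by rw [hS.eq_of_adj hp hs' hcp hcs']; rfl))

end Subdivide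

section Push

/-- The edges of `G` with exactly one end in `C`. -/
def edgeBoundary (G : SimpleGraph V) (C : Set V) : Set (Sym2 V) :=
  {e | ∃ a ∉ C, ∃ c ∈ C, G.Adj a c ∧ e = s(a, c)}

lemma mk_mem_edgeBoundary {G : SimpleGraph V} {C : Set V} {a b : V} :
    s(a, b) ∈ edgeBoundary G C ↔ G.Adj a b ∧ (a ∉ C ∧ b ∈ C ∨ a ∈ C ∧ b ∉ C) := by
  simp only [edgeBoundary, Set.mem_ofPred_eq, Sym2.eq_iff]
  constructor
  · rintro ⟨a', ha, c, hc, hac, ⟨rfl, rfl⟩ | ⟨rfl, rfl⟩⟩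
    · exact ⟨hac, Or.inl ⟨ha, hc⟩⟩
    · exact ⟨hac.symm, Or.inr ⟨hc, ha⟩⟩
  · rintro ⟨hab, ⟨ha, hb⟩ | ⟨ha, hb⟩⟩
    · exact ⟨a, ha, b, hb, hab, Or.inl ⟨rfl, rfl⟩⟩
    · exact ⟨b, hb, a, ha, hab.symm, Or.inr ⟨rfl, rfl⟩⟩

/-- The part of `G` outside `C` is a forest hanging from `C`: a vertex `a ∉ C` has the parent
`par a`, possibly in `C`, and its other neighbors are its children. The values of `par` on `C` are
irrelevant. -/
structure IsRootedAt (G : SimpleGraph V) (C : Set V) (par : V → V) : Prop where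
  adj_par : ∀ a ∉ C, G.Adj a (par a)
  notMem_of_adj : ∀ a ∉ C, ∀ b, G.Adj a b → b ≠ par a → b ∉ C
  par_eq_of_adj : ∀ a ∉ C, ∀ b, G.Adj a b → b ≠ par a → par b = a

open Classical in
/-- The vertex to which an element `s` of a dominating set of `G` moves once the edges of `F` are
subdivided: it stays in `C`, and outside `C` it takes one step in the subdivided graph towards its
parent. -/
noncomputable def push (C : Set V) (par : V → V) (F : Set (Sym2 V)) (s : V) : V ⊕ F :=
  if s ∈ C then Sum.inl s
  else if h : s(s, par s) ∈ F then Sum.inr ⟨s(s, par s), h⟩ else Sum.inl (par s)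

variable {G : SimpleGraph V} {C S : Set V} {par : V → V} {F : Set (Sym2 V)}

lemma push_of_mem {s : V} (hs : s ∈ C) : push C par F s = Sum.inl s :=
  if_pos hs

lemma push_of_notMem_of_mem {s : V} (hs : s ∉ C) (h : s(s, par s) ∈ F) :
    push C par F s = Sum.inr ⟨s(s, par s), h⟩ := by
  rw [push, if_neg hs, dif_pos h]

lemma push_of_notMem_of_notMem {s : V} (hs : s ∉ C) (h : s(s, par s) ∉ F) :
    push C par F s = Sum.inl (par s) := by
  rw [push, if_neg hs, dif_neg h]

namespace IsRootedAt

lemma push_eq_or_adj_self (h : IsRootedAt G C par) (s : V) :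
    push C par F s = Sum.inl s ∨ (subdivide G F).Adj (Sum.inl s) (push C par F s) := by
  by_cases hs : s ∈ C
  · exact Or.inl (push_of_mem hs)
  · by_cases hF : s(s, par s) ∈ F
    · simp [push_of_notMem_of_mem hs hF]
    · simp [push_of_notMem_of_notMem hs hF, h.adj_par s hs, hF]

lemma push_eq_or_adj_of_adj_of_mem (h : IsRootedAt G C par) (hF : F ⊆ edgeBoundary G C) {s b : V}
    (hbs : G.Adj b s) (hb : b ∈ C) :
    push C par F s = Sum.inl b ∨ (subdivide G F).Adj (Sum.inl b) (push C par F s) := by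
  by_cases hs : s ∈ C
  · have hbsF : s(b, s) ∉ F := fun hmem => by simpa [hb, hs] using mk_mem_edgeBoundary.1 (hF hmem)
    simp [push_of_mem hs, hbs, hbsF]
  · have hpar : par s = b := by
      by_contra hne
      exact h.notMem_of_adj s hs b hbs.symm (Ne.symm hne) hb
    by_cases hsF : s(s, par s) ∈ F
    · simp [push_of_notMem_of_mem hs hsF, hpar]
    · simp [push_of_notMem_of_notMem hs hsF, hpar]

/-- The element of `S` dominating `b` is a child of `b`, so it moves onto `b`. -/
lemma inl_mem_image_push (h : IsRootedAt G C par) (hF : F ⊆ edgeBoundary G C)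
    (hD : IsDominating G S) {b : V} (hbC : b ∉ C) (hbS : b ∉ S) (hpar : par b ∉ S) :
    Sum.inl b ∈ push C par F '' S := by
  obtain ⟨s, hs, hbs⟩ := hD b hbS
  have hne : s ≠ par b := fun heq => hpar (heq ▸ hs)
  have hsC := h.notMem_of_adj b hbC s hbs hne
  have hps := h.par_eq_of_adj b hbC s hbs hne
  have hsF : s(s, par s) ∉ F := fun hmem => by
    simpa [hsC, hps, hbC] using mk_mem_edgeBoundary.1 (hF hmem)
  exact ⟨s, hs, by rw [push_of_notMem_of_notMem hsC hsF, hps]⟩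

lemma exists_push_eq_or_adj_inl (h : IsRootedAt G C par) (hF : F ⊆ edgeBoundary G C)
    (hS : Is2Packing G S) (hD : IsDominating G S) (hleaf : ∀ v, IsLeaf G v → v ∈ S) (b : V) :
    ∃ x ∈ push C par F '' S, x = Sum.inl b ∨ (subdivide G F).Adj (Sum.inl b) x := by
  by_cases hbS : b ∈ S
  · exact ⟨_, ⟨b, hbS, rfl⟩, h.push_eq_or_adj_self b⟩
  by_cases hbC : b ∈ C
  · obtain ⟨s, hs, hbs⟩ := hD b hbS
    exact ⟨_, ⟨s, hs, rfl⟩, h.push_eq_or_adj_of_adj_of_mem hF hbs hbC⟩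
  by_cases hpar : par b ∈ S
  · obtain ⟨c, hc, hbc⟩ :=
      exists_adj_ne_of_not_isLeaf (fun hb => hbS (hleaf b hb)) (h.adj_par b hbC)
    have hcC := h.notMem_of_adj b hbC c hbc hc
    have hcS : c ∉ S := fun hcS => hc (hS.eq_of_adj hcS hpar hbc (h.adj_par b hbC))
    have hbcF : s(b, c) ∉ F := fun hmem => by
      simpa [hbC, hcC] using mk_mem_edgeBoundary.1 (hF hmem)
    refine ⟨_, h.inl_mem_image_push hF hD hcC hcS ?_, Or.inr (by simp [hbc, hbcF])⟩
    rwa [h.par_eq_of_adj b hbC c hbc hc]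
  · exact ⟨_, h.inl_mem_image_push hF hD hbC hbS hpar, Or.inl rfl⟩

lemma exists_push_eq_or_adj_inr (h : IsRootedAt G C par) (hF : F ⊆ edgeBoundary G C)
    (hD : IsDominating G S) (e : F) :
    ∃ x ∈ push C par F '' S, x = Sum.inr e ∨ (subdivide G F).Adj (Sum.inr e) x := by
  obtain ⟨_, he⟩ := e
  obtain ⟨a, ha, c, hc, hac, rfl⟩ := hF he
  obtain rfl : c = par a := by
    by_contra hne
    exact h.notMem_of_adj a ha c hac hne hc
  by_cases haS : a ∈ S
  · exact ⟨_, ⟨a, haS, rfl⟩, Or.inl (push_of_notMem_of_mem ha he)⟩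
  by_cases hpar : par a ∈ S
  · exact ⟨_, ⟨par a, hpar, rfl⟩, Or.inr (by simp [push_of_mem hc])⟩
  · exact ⟨_, h.inl_mem_image_push hF hD ha haS hpar, Or.inr (by simp)⟩

lemma dominationNumber_subdivide_le [Finite V] (h : IsRootedAt G C par)
    (hF : F ⊆ edgeBoundary G C) (hS : Is2Packing G S) (hD : IsDominating G S)
    (hleaf : ∀ v, IsLeaf G v → v ∈ S) :
    dominationNumber (subdivide G F) ≤ dominationNumber G := by
  have hpush : IsDominating (subdivide G F) (push C par F '' S) := by
    refine isDominating_iff.2 ?_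
    rintro (b | e)
    · exact h.exists_push_eq_or_adj_inl hF hS hD hleaf b
    · exact h.exists_push_eq_or_adj_inr hF hD e
  calc dominationNumber (subdivide G F) ≤ (push C par F '' S).ncard := dominationNumber_le hpush
    _ ≤ S.ncard := Set.ncard_image_le
    _ = dominationNumber G := hS.ncard_eq_dominationNumber hD

end IsRootedAt

end Push

section Tree

variable {G : SimpleGraph V}

lemma exists_adj_dist_lt (hG : G.Connected) {r a : V} (ha : a ≠ r) :
    ∃ b, G.Adj a b ∧ G.dist r b < G.dist r a := by
  obtain ⟨w, hw⟩ := hG.exists_walk_length_eq_dist a r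
  cases w with
  | nil => exact absurd rfl ha
  | cons hab w =>
    refine ⟨_, hab, ?_⟩
    rw [dist_comm, dist_comm (u := r), ← hw, Walk.length_cons]
    exact Nat.lt_succ_of_le (dist_le w)

lemma eq_of_adj_of_dist_lt (hG : G.IsTree) {r a b c : V} (hab : G.Adj a b) (hac : G.Adj a c)
    (hb : G.dist r b < G.dist r a) (hc : G.dist r c < G.dist r a) : b = c := by
  have exists_path : ∀ x, G.Adj a x → G.dist r x < G.dist r a →
      ∃ w : G.Walk a r, w.IsPath ∧ w.snd = x := by
    intro x hax hx
    obtain ⟨w, hw⟩ := hG.connected.exists_walk_length_eq_dist x r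
    refine ⟨Walk.cons hax w, Walk.isPath_of_length_eq_dist _ (le_antisymm ?_ (dist_le _)), by simp⟩
    rw [Walk.length_cons, hw, dist_comm, dist_comm (u := a)]
    exact hx
  obtain ⟨p, hp, rfl⟩ := exists_path b hab hb
  obtain ⟨q, hq, rfl⟩ := exists_path c hac hc
  rw [(hG.existsUnique_path a r).unique hp hq]

lemma dist_lt_of_adj_of_ne (hG : G.IsTree) {r a b c : V} (hab : G.Adj a b) (hac : G.Adj a c)
    (hne : c ≠ b) (hb : G.dist r b < G.dist r a) : G.dist r a < G.dist r c := by
  refine (hG.dist_ne_of_adj r hac).lt_or_gt.resolve_right fun hc => ?_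
  exact hne (eq_of_adj_of_dist_lt hG hac hab hc hb)

lemma exists_isRootedAt (hG : G.IsTree) {C : Set V} {r : V} (hr : r ∈ C)
    (hC : ∀ a ∈ C, ∀ b, G.Adj a b → G.dist r b < G.dist r a → b ∈ C) :
    ∃ par, IsRootedAt G C par := by
  choose! par hadj hlt using fun a (ha : a ≠ r) => exists_adj_dist_lt hG.connected ha
  have hne : ∀ a ∉ C, a ≠ r := fun a ha heq => ha (heq ▸ hr)
  have child_lt : ∀ a ∉ C, ∀ b, G.Adj a b → b ≠ par a → G.dist r a < G.dist r b :=
    fun a ha b hab hb => dist_lt_of_adj_of_ne hG (hadj a (hne a ha)) hab hb (hlt a (hne a ha))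
  refine ⟨par, fun a ha => hadj a (hne a ha), fun a ha b hab hb hbC => ?_, fun a ha b hab hb => ?_⟩
  · exact ha (hC b hbC a hab.symm (child_lt a ha b hab hb))
  · have hbr : b ≠ r := by
      rintro rfl
      simpa using child_lt a ha b hab hb
    exact eq_of_adj_of_dist_lt hG (hadj b hbr) hab.symm (hlt b hbr) (child_lt a ha b hab hb)

/-- The set `C` is the vertex set of the path from `u` to `w`. -/
lemma exists_isRootedAt_of_dist_lt (hG : G.IsTree) {u v w z : V} (huv : G.Adj u v)
    (hwz : G.Adj w z) (hv : G.dist u w < G.dist v w) (hz : G.dist u w < G.dist u z) :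
    ∃ C par, IsRootedAt G C par ∧ {s(u, v), s(w, z)} ⊆ edgeBoundary G C := by
  set C : Set V := {x | G.dist u x + G.dist x w ≤ G.dist u w} with hC
  have huC : u ∈ C := by simp [hC]
  have hwC : w ∈ C := by simp [hC]
  have hvC : v ∉ C := by
    simp only [hC, Set.mem_ofPred_eq]
    omega
  have hzC : z ∉ C := by
    simp only [hC, Set.mem_ofPred_eq]
    omega
  obtain ⟨par, h⟩ := exists_isRootedAt hG huC fun a ha b hab hb => by
    have htri := hG.connected.dist_triangle (u := b) (v := a) (w := w)
    rw [dist_eq_one_iff_adj.2 hab.symm] at htri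
    simp only [hC, Set.mem_ofPred_eq] at ha ⊢
    omega
  refine ⟨C, par, h, ?_⟩
  rintro _ (rfl | rfl)
  · exact mk_mem_edgeBoundary.2 ⟨huv, Or.inr ⟨huC, hvC⟩⟩
  · exact mk_mem_edgeBoundary.2 ⟨hwz, Or.inr ⟨hwC, hzC⟩⟩

lemma exists_isRootedAt_pair_subset (hG : G.IsTree) {e f : Sym2 V} (he : e ∈ G.edgeSet)
    (hf : f ∈ G.edgeSet) : ∃ C par, IsRootedAt G C par ∧ {e, f} ⊆ edgeBoundary G C := by
  induction e with | _ u v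
  induction f with | _ w z
  rw [mem_edgeSet] at he hf
  wlog hz : G.dist u w < G.dist u z generalizing w z
  · rw [Sym2.eq_swap (a := w)]
    exact this z w hf.symm ((hG.dist_ne_of_adj u hf).lt_or_gt.resolve_left hz)
  have hne := hG.dist_ne_of_adj w he
  rw [SimpleGraph.dist_comm, SimpleGraph.dist_comm (u := w)] at hne
  rcases hne.lt_or_gt with hv | hv
  · exact exists_isRootedAt_of_dist_lt hG he hf hv hz
  · have htri := hG.connected.dist_triangle (u := u) (v := v) (w := z)
    rw [dist_eq_one_iff_adj.2 he] at htri
    rw [Sym2.eq_swap (a := u)]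
    exact exists_isRootedAt_of_dist_lt hG he.symm hf hv (by omega)

lemma exists_isRootedAt_subset_edgeBoundary [Finite V] (hG : G.IsTree) {F : Set (Sym2 V)}
    (hF : F ⊆ G.edgeSet) (hcard : F.ncard ≤ 2) :
    ∃ C par, IsRootedAt G C par ∧ F ⊆ edgeBoundary G C := by
  obtain rfl | ⟨e, he⟩ := F.eq_empty_or_nonempty
  · obtain ⟨par, h⟩ := exists_isRootedAt hG (Set.mem_univ hG.connected.nonempty.some)
      fun _ _ _ _ _ => Set.mem_univ _
    exact ⟨_, par, h, Set.empty_subset _⟩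
  have hpair : ∃ f ∈ F, F ⊆ {e, f} := by
    have hsdiff : (F \ {e}).ncard ≤ 1 := by
      have := Set.ncard_sdiff_singleton_add_one he
      omega
    rcases (Set.ncard_le_one_iff_eq (Set.toFinite _)).1 hsdiff with hF' | ⟨f, hf⟩
    · exact ⟨e, he, by simpa [Set.sdiff_eq_empty] using hF'⟩
    · exact ⟨f, (hf.ge rfl).1, by rw [← hf]; simp⟩
  obtain ⟨f, hf, hFef⟩ := hpair
  obtain ⟨C, par, h, hsub⟩ := exists_isRootedAt_pair_subset hG (hF he) (hF hf)
  exact ⟨C, par, h, hFef.trans hsub⟩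

lemma exists_eq_or_adj_forall_dist_lt (hG : G.IsTree) (r x : V) :
    ∃ y, (y = x ∨ G.Adj x y) ∧ ∀ b, G.Adj x b → G.dist r b < G.dist r x → b = y := by
  by_cases h : ∃ b, G.Adj x b ∧ G.dist r b < G.dist r x
  · obtain ⟨y, hxy, hy⟩ := h
    exact ⟨y, Or.inr hxy, fun b hxb hb => eq_of_adj_of_dist_lt hG hxb hxy hb hy⟩
  · push Not at h
    exact ⟨x, Or.inl rfl, fun b hxb hb => absurd hb (h b hxb).not_gt⟩

lemma Is2Packing.insert_of_forall_dist_le (hG : G.IsTree) {P : Set V} (hP : Is2Packing G P)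
    {r x y : V} (hle : ∀ p ∈ P, G.dist r p ≤ G.dist r x)
    (hy : ∀ b, G.Adj x b → G.dist r b < G.dist r x → b = y)
    (hyP : ∀ p ∈ P, ¬ (y = p ∨ G.Adj p y)) : Is2Packing G (insert x P) := by
  refine hP.insert_of_forall (fun p hp hxp => ?_) fun p hp w hwx hwp => ?_
  · have hlt := (hle p hp).lt_of_ne (hG.dist_ne_of_adj r hxp).symm
    exact hyP p hp (Or.inl (hy p hxp hlt).symm)
  · rcases (hG.dist_ne_of_adj r hwx).lt_or_gt with hlt | hlt
    · exact absurd (Or.inr (hy w hwx.symm hlt ▸ hwp.symm)) (hyP p hp)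
    · exact eq_of_adj_of_dist_lt hG hwx hwp hlt ((hle p hp).trans_lt hlt)

/-- Greedily: put the deepest vertex `x` of `X` into `P` and its parent `y` into `D`, then discard
the vertices of `X` that `y` dominates. -/
lemma exists_is2Packing_dominated_by [Finite V] (hG : G.IsTree) (X : Set V) :
    ∃ P ⊆ X, Is2Packing G P ∧ ∃ D : Set V, (∀ x ∈ X, ∃ u ∈ D, u = x ∨ G.Adj x u) ∧
      D.ncard ≤ P.ncard := by
  induction X using WellFoundedLT.induction with | _ X ih
  obtain rfl | hX := X.eq_empty_or_nonempty
  · exact ⟨∅, subset_rfl, fun _ hu => hu.elim, ∅, fun _ hx => hx.elim, le_rfl⟩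
  obtain ⟨r⟩ := hG.connected.nonempty
  obtain ⟨x, hx, hmax⟩ := X.exists_max_image (G.dist r) X.toFinite hX
  obtain ⟨y, hyx, hy⟩ := exists_eq_or_adj_forall_dist_lt hG r x
  obtain ⟨P, hPX, hP, D, hD, hcard⟩ := ih {p ∈ X | ¬ (y = p ∨ G.Adj p y)}
    ⟨Set.sep_subset _ _, fun h => (h hx).2 hyx⟩
  refine ⟨insert x P, Set.insert_subset hx fun p hp => (hPX hp).1,
    hP.insert_of_forall_dist_le hG (fun p hp => hmax p (hPX hp).1) hy fun p hp => (hPX hp).2,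
    insert y D, fun p hp => ?_, ?_⟩
  · by_cases hpy : y = p ∨ G.Adj p y
    · exact ⟨y, Or.inl rfl, hpy⟩
    · obtain ⟨u, hu, hpu⟩ := hD p ⟨hp, hpy⟩
      exact ⟨u, Or.inr hu, hpu⟩
  · rw [Set.ncard_insert_of_notMem fun hxP => (hPX hxP).2 hyx]
    exact (Set.ncard_insert_le _ _).trans (Nat.succ_le_succ hcard)

lemma exists_is2Packing_ncard_eq_dominationNumber [Finite V] (hG : G.IsTree) :
    ∃ P, Is2Packing G P ∧ P.ncard = dominationNumber G := by
  obtain ⟨P, -, hP, D, hD, hcard⟩ := exists_is2Packing_dominated_by hG Set.univ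
  refine ⟨P, hP, hP.ncard_le_dominationNumber.antisymm ?_⟩
  exact (dominationNumber_le (isDominating_iff.2 fun v => hD v trivial)).trans hcard

lemma exists_mem_sdiff_dist_lt (hG : G.IsTree) {S S' : Set V} (hS : Is2Packing G S)
    (hS' : Is2Packing G S') (hD' : IsDominating G S') (hleaf' : ∀ v, IsLeaf G v → v ∈ S')
    (r : V) {s : V} (hs : s ∈ S \ S') : ∃ t ∈ S' \ S, G.dist r s < G.dist r t := by
  obtain ⟨s', hs', hss'⟩ := hD' s hs.2
  rcases (hG.dist_ne_of_adj r hss').lt_or_gt with hlt | hlt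
  · exact ⟨s', ⟨hs', fun h => hS.not_adj hs.1 h hss'⟩, hlt⟩
  obtain ⟨c, hcs', hsc⟩ := exists_adj_ne_of_not_isLeaf (fun h => hs.2 (hleaf' s h)) hss'
  have hsc_lt := dist_lt_of_adj_of_ne hG hss' hsc hcs' hlt
  obtain ⟨t, ht, hct⟩ := hD' c fun hc => hcs' (hS'.eq_of_adj hc hs' hsc hss')
  have hts : t ≠ s := fun h => hs.2 (h ▸ ht)
  refine ⟨t, ⟨ht, fun h => hts (hS.eq_of_adj h hs.1 hct hsc.symm)⟩, ?_⟩
  exact hsc_lt.trans (dist_lt_of_adj_of_ne hG hsc.symm hct hts hsc_lt)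

lemma eq_of_is2Packing_of_isDominating [Finite V] (hG : G.IsTree) {S S' : Set V}
    (hS : Is2Packing G S) (hD : IsDominating G S) (hleaf : ∀ v, IsLeaf G v → v ∈ S)
    (hS' : Is2Packing G S') (hD' : IsDominating G S') (hleaf' : ∀ v, IsLeaf G v → v ∈ S') :
    S = S' := by
  by_contra hne
  obtain ⟨r⟩ := hG.connected.nonempty
  obtain ⟨s, hs, hmax⟩ := (symmDiff S S').exists_max_image (G.dist r) (Set.toFinite _)
    (Set.symmDiff_nonempty.2 hne)
  rcases hs with hs | hs
  · obtain ⟨t, ht, hlt⟩ := exists_mem_sdiff_dist_lt hG hS hS' hD' hleaf' r hs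
    exact (hmax t (Or.inr ht)).not_gt hlt
  · obtain ⟨t, ht, hlt⟩ := exists_mem_sdiff_dist_lt hG hS' hS hD hleaf r hs
    exact (hmax t (Or.inl ht)).not_gt hlt

end Tree

/-- A finite tree `T` with at least three vertices has domination
subdivision number 3 if and only if `T` has a unique dominating 2-packing containing
all its leaves. -/
theorem sd_eq_three_iff_uniquePacking {V : Type u} [Fintype V]
    (T : SimpleGraph V) (hT : T.IsTree) (h3 : 3 ≤ Fintype.card V) :
    sd T = 3 ↔
      ∃! S : Set V, IsDominating T S ∧ Is2Packing T S ∧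
        ∀ v : V, IsLeaf T v → v ∈ S := by
  have : Nontrivial V := Fintype.one_lt_card_iff_nontrivial.1 (by omega)
  have hadj := hT.connected.preconnected.exists_adj_of_nontrivial
  constructor
  · intro hsd
    have hsd : 2 < sd T := by omega
    obtain ⟨S, hS, hcard⟩ := exists_is2Packing_ncard_eq_dominationNumber hT
    have hD := hS.isDominating_of_two_lt_sd hadj hcard hsd
    have hleaf : ∀ v, IsLeaf T v → v ∈ S := fun v =>
      hS.isLeaf_mem_of_two_lt_sd hT.connected (by rwa [Nat.card_eq_fintype_card]) hD hsd
    exact ⟨S, ⟨hD, hS, hleaf⟩, fun S' ⟨hD', hS', hleaf'⟩ =>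
      eq_of_is2Packing_of_isDominating hT hS' hD' hleaf' hS hD hleaf⟩
  · rintro ⟨S, ⟨hD, hS, hleaf⟩, -⟩
    obtain ⟨w, hw⟩ := hadj (Classical.arbitrary V)
    refine sd_eq_add_one (hS.exists_lt_dominationNumber_subdivide
      (ne_bot_iff_exists_adj.2 ⟨_, w, hw⟩) hD hleaf) fun F hF hcard => ?_
    obtain ⟨C, par, h, hFC⟩ := exists_isRootedAt_subset_edgeBoundary hT hF hcard
    exact h.dominationNumber_subdivide_le hFC hS hD hleaf

end GenCorona
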